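/- arXiv:2001.02055 — 2 statements merged into one kernel-verified Lean document; each statement's English description precedes it below -/
import Mathlib

section
/- Let M ≥ 2 and N ≥ D ≥ 1 be integers, and for each m = 1,…,M let (ψ_{m,n})_{n=1}^N be an ETF(D,N) in ℂ^D. Then max{ |⟨ψ_{m,n}, ψ_{m',n'}⟩|² : m ≠ m', 1 ≤ n,n' ≤ N } ≥ 1/D, and equality holds if and only if |⟨ψ_{m,n}, ψ_{m',n'}⟩|² = 1/D for all m ≠ m' and all n, n', i.e. if and only if the combined family is an MUETF(D,N,M). -/
open scoped BigOperators

/-- A family `(φ n)` of vectors is an equiangular tight frame `ETF(D,N)`. -/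
def IsETF {ι E : Type*} [Fintype ι] [NormedAddCommGroup E] [InnerProductSpace ℂ E]
    (D N : ℕ) (φ : ι → E) : Prop :=
  (∀ n, ‖φ n‖ = 1) ∧
  (∀ n n', n ≠ n' →
    ‖(inner ℂ (φ n) (φ n') : ℂ)‖ ^ 2 = ((N : ℝ) - D) / (D * ((N : ℝ) - 1))) ∧
  (∀ y : E, ∑ n, (inner ℂ (φ n) y : ℂ) • φ n = ((N : ℂ) / (D : ℂ)) • y)

/-- A doubly-indexed family `(ψ m n)` of unit vectors is an `MUETF(D,N,M)`. -/
def IsMUETF {μ ν E : Type*} [NormedAddCommGroup E] [InnerProductSpace ℂ E]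
    (D N : ℕ) (ψ : μ → ν → E) : Prop :=
  (∀ m n, ‖ψ m n‖ = 1) ∧
  (∀ m n n', n ≠ n' →
    ‖(inner ℂ (ψ m n) (ψ m n') : ℂ)‖ ^ 2 = ((N : ℝ) - D) / (D * ((N : ℝ) - 1))) ∧
  (∀ m m' n n', m ≠ m' → ‖(inner ℂ (ψ m n) (ψ m' n') : ℂ)‖ ^ 2 = 1 / (D : ℝ))

/-!
Summing `|⟨φ n, y⟩|²` over a tight frame of `N` vectors with constant `A` gives `A ‖y‖²`, so for a
unit vector `y` the average of these numbers is `A / N`, whatever `y` is. Taking `y` from another of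
the families, the squared cross inner products average to `A / N`, which is `1 / D` when
`A = N / D`. Hence some of them reach the average, and if none exceeds it then all are equal to it.
-/

/-- The finite family `φ` is a tight frame with frame constant `A`: its frame operator is `A` times
the identity. The degenerate case `A = 0` is allowed. -/
def IsTightFrame (𝕜 : Type*) {ι E : Type*} [RCLike 𝕜] [Fintype ι] [NormedAddCommGroup E]
    [InnerProductSpace 𝕜 E] (A : ℝ) (φ : ι → E) : Prop :=
  ∀ y : E, ∑ n, inner 𝕜 (φ n) y • φ n = (A : 𝕜) • y

namespace IsTightFrame

variable {𝕜 ι E : Type*} [RCLike 𝕜] [Fintype ι] [NormedAddCommGroup E] [InnerProductSpace 𝕜 E]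
  {A : ℝ} {φ : ι → E}

lemma sum_norm_inner_sq (hφ : IsTightFrame 𝕜 A φ) (y : E) :
    ∑ n, ‖inner 𝕜 (φ n) y‖ ^ 2 = A * ‖y‖ ^ 2 := by
  have hinner : ∑ n, inner 𝕜 (φ n) y * inner 𝕜 y (φ n) = (A : 𝕜) * (‖y‖ : 𝕜) ^ 2 := by
    rw [← inner_self_eq_norm_sq_to_K, ← inner_smul_right, ← hφ y, inner_sum]
    simp only [inner_smul_right]
  have hterm (n : ι) :
      inner 𝕜 (φ n) y * inner 𝕜 y (φ n) = ((‖inner 𝕜 (φ n) y‖ ^ 2 : ℝ) : 𝕜) := by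
    rw [← inner_conj_symm y (φ n), RCLike.mul_conj, RCLike.ofReal_pow]
  simp only [hterm] at hinner
  exact_mod_cast hinner

lemma sum_norm_inner_sq_eq_sum_const [Nonempty ι] (hφ : IsTightFrame 𝕜 A φ) (y : E) :
    ∑ n, ‖inner 𝕜 (φ n) y‖ ^ 2 = ∑ _n : ι, A * ‖y‖ ^ 2 / Fintype.card ι := by
  have hcard : (Fintype.card ι : ℝ) ≠ 0 := Nat.cast_ne_zero.2 Fintype.card_ne_zero
  rw [hφ.sum_norm_inner_sq, Finset.sum_const, Finset.card_univ, nsmul_eq_mul,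
    mul_div_cancel₀ _ hcard]

lemma exists_div_card_le_norm_inner_sq [Nonempty ι] (hφ : IsTightFrame 𝕜 A φ) (y : E) :
    ∃ n, A * ‖y‖ ^ 2 / Fintype.card ι ≤ ‖inner 𝕜 (φ n) y‖ ^ 2 := by
  obtain ⟨n, -, hn⟩ :=
    Finset.exists_le_of_sum_le Finset.univ_nonempty (hφ.sum_norm_inner_sq_eq_sum_const y).ge
  exact ⟨n, hn⟩

lemma norm_inner_sq_eq_div_card_of_forall_le (hφ : IsTightFrame 𝕜 A φ) {y : E}
    (hle : ∀ n, ‖inner 𝕜 (φ n) y‖ ^ 2 ≤ A * ‖y‖ ^ 2 / Fintype.card ι) (n : ι) :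
    ‖inner 𝕜 (φ n) y‖ ^ 2 = A * ‖y‖ ^ 2 / Fintype.card ι :=
  have : Nonempty ι := ⟨n⟩
  (Finset.sum_eq_sum_iff_of_le fun n _ ↦ hle n).1 (hφ.sum_norm_inner_sq_eq_sum_const y) n
    (Finset.mem_univ n)

end IsTightFrame

section ETF

variable {E : Type*} [NormedAddCommGroup E] [InnerProductSpace ℂ E] {D N : ℕ}

lemma IsETF.isTightFrame {ι : Type*} [Fintype ι] {φ : ι → E} (hφ : IsETF D N φ) :
    IsTightFrame ℂ (N / D) φ := fun y ↦ by
  simpa only [Complex.coe_algebraMap, Complex.ofReal_div, Complex.ofReal_natCast] using hφ.2.2 y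

lemma isMUETF_iff_of_forall_isETF {μ ν : Type*} [Fintype ν] {ψ : μ → ν → E}
    (hψ : ∀ m, IsETF D N (ψ m)) :
    IsMUETF D N ψ ↔
      ∀ m m' n n', m ≠ m' → ‖(inner ℂ (ψ m n) (ψ m' n') : ℂ)‖ ^ 2 = 1 / (D : ℝ) :=
  ⟨fun h ↦ h.2.2, fun h ↦ ⟨fun m ↦ (hψ m).1, fun m ↦ (hψ m).2.1, h⟩⟩

end ETF

theorem stmt7_general {𝕜 μ ν E : Type*} [RCLike 𝕜] [Nontrivial μ] [Fintype ν] [Nonempty ν]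
    [NormedAddCommGroup E] [InnerProductSpace 𝕜 E] {A : ℝ} {ψ : μ → ν → E}
    (hnorm : ∀ m n, ‖ψ m n‖ = 1) (hψ : ∀ m, IsTightFrame 𝕜 A (ψ m)) :
    (∃ m m' n n', m ≠ m' ∧ A / Fintype.card ν ≤ ‖inner 𝕜 (ψ m n) (ψ m' n')‖ ^ 2) ∧
    ((∀ m m' n n', m ≠ m' → ‖inner 𝕜 (ψ m n) (ψ m' n')‖ ^ 2 ≤ A / Fintype.card ν) ↔
      ∀ m m' n n', m ≠ m' → ‖inner 𝕜 (ψ m n) (ψ m' n')‖ ^ 2 = A / Fintype.card ν) := by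
  have hmean (m : μ) (n : ν) : A / Fintype.card ν = A * ‖ψ m n‖ ^ 2 / Fintype.card ν := by
    rw [hnorm, one_pow, mul_one]
  refine ⟨?_, fun hle m m' n n' hm ↦ ?_, fun heq m m' n n' hm ↦ (heq m m' n n' hm).le⟩
  · obtain ⟨m, m', hm⟩ := exists_pair_ne μ
    obtain ⟨n'⟩ := ‹Nonempty ν›
    obtain ⟨n, hn⟩ := (hψ m).exists_div_card_le_norm_inner_sq (ψ m' n')
    exact ⟨m, m', n, n', hm, (hmean m' n').trans_le hn⟩
  · rw [hmean m' n']
    exact (hψ m).norm_inner_sq_eq_div_card_of_forall_le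
      (fun k ↦ (hle m m' k n' hm).trans_eq (hmean m' n')) n

/-- if each `(ψ m n)ₙ` is an `ETF(D,N)` in `ℂ^D` (`m = 1,…,M`, `M ≥ 2`),
then `max{|⟨ψ m n, ψ m' n'⟩|² : m ≠ m'} ≥ 1/D`, and equality holds iff
`|⟨ψ m n, ψ m' n'⟩|² = 1/D` for all `m ≠ m'`, i.e. iff the combined family is an
`MUETF(D,N,M)`. -/
theorem stmt7 (M N D : ℕ) (hM : 2 ≤ M) (hD : 1 ≤ D) (hDN : D ≤ N) (hN : 2 ≤ N)
    (ψ : Fin M → Fin N → EuclideanSpace ℂ (Fin D))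
    (hETF : ∀ m, IsETF D N (ψ m)) :
    (∃ m m' n n', m ≠ m' ∧
      (1 : ℝ) / D ≤ ‖(inner ℂ (ψ m n) (ψ m' n') : ℂ)‖ ^ 2) ∧
    ((∀ m m' n n', m ≠ m' →
        ‖(inner ℂ (ψ m n) (ψ m' n') : ℂ)‖ ^ 2 ≤ 1 / (D : ℝ)) ↔
      IsMUETF D N ψ) := by
  have : Nontrivial (Fin M) := Fin.nontrivial_iff_two_le.2 hM
  have : NeZero N := .of_pos (Nat.zero_lt_of_lt hN)
  simpa only [isMUETF_iff_of_forall_isETF hETF, Fintype.card_fin, one_div,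
    div_div_cancel_left' (NeZero.ne (N : ℝ))] using
    stmt7_general (fun m ↦ (hETF m).1) fun m ↦ (hETF m).isTightFrame
end

section
/- Let D₁ ≤ N₁ and D₂ ≤ N₂ be positive integers with N₁, N₂ ≥ 2 satisfying (N₁−D₁)/(D₁(N₁−1)) = (N₂−D₂)/(N₂−1). Let (φ_{n₁})_{n₁=1}^{N₁} be an ETF(D₁,N₁) in ℂ^{D₁} and let (ψ_{n₁,n₂}), n₁ = 1,…,N₁, n₂ = 1,…,N₂, be an MUETF(D₂,N₂,N₁) in ℂ^{D₂}. Then the family of tensor products (φ_{n₁} ⊗ ψ_{n₁,n₂}), indexed by (n₁,n₂) ∈ {1,…,N₁} × {1,…,N₂}, is an ETF(D₃,N₃) in ℂ^{D₁} ⊗ ℂ^{D₂} ≅ ℂ^{D₁D₂}, where D₃ = D₁D₂ and N₃ = N₁N₂; moreover N₃ − D₃ = D₁N₁(N₂−D₂) + (N₁−D₁), (N₃−D₃)/(D₃(N₃−1)) = (N₂−D₂)/(D₂(N₂−1)), and D₃(N₃−D₃)/(N₃−1) = D₁²·D₂(N₂−D₂)/(N₂−1). -/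
open scoped BigOperators

/-- The tensor (Kronecker) product of vectors, realizing
`ℂ^{D₁} ⊗ ℂ^{D₂} ≅ ℂ^{D₁ × D₂}`; it satisfies `⟨u⊗v, u'⊗v'⟩ = ⟨u,u'⟩⟨v,v'⟩`. -/
def tensorVec {ι κ : Type*} [Fintype ι] [Fintype κ]
    (u : EuclideanSpace ℂ ι) (v : EuclideanSpace ℂ κ) :
    EuclideanSpace ℂ (ι × κ) :=
  WithLp.toLp 2 fun p => u p.1 * v p.2

/-!
A tensor product family has inner products `⟨φ m, φ m'⟩ ⟨ψ m n, ψ m' n'⟩`. For `m = m'` the first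
factor is `1`; for `m ≠ m'` the squared modulus is `(N₂ - D₂) / (N₂ - 1) * (1 / D₂)` by the
parameter condition. So in both cases it equals `(N₂ - D₂) / (D₂ (N₂ - 1))`, which the parameter
condition turns into the Welch bound for `N₁ N₂` vectors in dimension `D₁ D₂`.

Unit vectors that attain the Welch bound form a tight frame: their frame operator `S` satisfies
`D tr(S²) = (tr S)²`, the equality case of the Cauchy–Schwarz inequality
`⟨S, 1⟩² ≤ ⟨S, S⟩ ⟨1, 1⟩` for the Hilbert–Schmidt inner product, so `S` is a multiple of `1`.
-/

open InnerProductSpace Module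

section SymmetricTrace

variable {𝕜 E : Type*} [RCLike 𝕜] [NormedAddCommGroup E] [InnerProductSpace 𝕜 E]
  [FiniteDimensional 𝕜 E] {T : E →ₗ[𝕜] E}

theorem eq_zero_of_isSymmetric_of_trace_mul_self_eq_zero (hT : T.IsSymmetric)
    (htr : (T * T).trace 𝕜 E = 0) : T = 0 := by
  let b := stdOrthonormalBasis 𝕜 E
  have htr_eq : (T * T).trace 𝕜 E = ((∑ i, ‖T (b i)‖ ^ 2 : ℝ) : 𝕜) := by
    simp only [LinearMap.trace_eq_sum_inner _ b, Module.End.mul_apply, ← hT (b _),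
      inner_self_eq_norm_sq_to_K, map_sum, RCLike.ofReal_pow]
  have hsum : ∑ i, ‖T (b i)‖ ^ 2 = 0 := by
    rwa [htr_eq, RCLike.ofReal_eq_zero] at htr
  refine b.toBasis.ext fun i => ?_
  simpa using (Finset.sum_eq_zero_iff_of_nonneg fun i _ => sq_nonneg ‖T (b i)‖).1 hsum i
    (Finset.mem_univ i)

theorem conj_trace_of_isSymmetric (hT : T.IsSymmetric) :
    (starRingEnd 𝕜) (T.trace 𝕜 E) = T.trace 𝕜 E := by
  simp only [hT.trace_eq_sum_eigenvalues rfl, map_sum, RCLike.conj_ofReal]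

theorem finrank_smul_eq_trace_smul_one (hT : T.IsSymmetric)
    (htr : finrank 𝕜 E * (T * T).trace 𝕜 E = T.trace 𝕜 E ^ 2) :
    (finrank 𝕜 E : 𝕜) • T = T.trace 𝕜 E • (1 : E →ₗ[𝕜] E) := by
  rw [← sub_eq_zero]
  refine eq_zero_of_isSymmetric_of_trace_mul_self_eq_zero ?_ ?_
  · exact (hT.smul (map_natCast _ _)).sub
      (LinearMap.IsSymmetric.id.smul (conj_trace_of_isSymmetric hT))
  · simp only [sub_mul, mul_sub, smul_mul_assoc, mul_smul_comm, one_mul, mul_one, map_sub, map_smul,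
      LinearMap.trace_one, smul_eq_mul]
    linear_combination (finrank 𝕜 E : 𝕜) * htr

end SymmetricTrace

section FrameOperator

variable {𝕜 ι E : Type*} [RCLike 𝕜] [Fintype ι] [NormedAddCommGroup E] [InnerProductSpace 𝕜 E]

variable (𝕜) in
/-- The frame operator `y ↦ ∑ n, ⟨φ n, y⟩ φ n` of a finite family of vectors; the family is a tight
frame exactly when this is a positive multiple of the identity. -/
noncomputable def frameOperator (φ : ι → E) : E →ₗ[𝕜] E :=
  ∑ n, (rankOne 𝕜 (φ n) (φ n) : E →ₗ[𝕜] E)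

theorem frameOperator_apply (φ : ι → E) (y : E) :
    frameOperator 𝕜 φ y = ∑ n, inner 𝕜 (φ n) y • φ n := by
  simp [frameOperator]

theorem isSymmetric_frameOperator (φ : ι → E) : (frameOperator 𝕜 φ).IsSymmetric := by
  intro x y
  simp only [frameOperator_apply, sum_inner, inner_sum, inner_smul_left, inner_smul_right,
    inner_conj_symm, mul_comm]

variable [FiniteDimensional 𝕜 E]

theorem trace_frameOperator (φ : ι → E) :
    (frameOperator 𝕜 φ).trace 𝕜 E = ((∑ n, ‖φ n‖ ^ 2 : ℝ) : 𝕜) := by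
  simp only [frameOperator, map_sum, trace_rankOne, inner_self_eq_norm_sq_to_K, RCLike.ofReal_pow]

theorem trace_frameOperator_mul_self (φ : ι → E) :
    (frameOperator 𝕜 φ * frameOperator 𝕜 φ).trace 𝕜 E =
      ((∑ n, ∑ n', ‖inner 𝕜 (φ n) (φ n')‖ ^ 2 : ℝ) : 𝕜) := by
  have trace_rankOne_mul (n n' : ι) :
      ((rankOne 𝕜 (φ n) (φ n) : E →ₗ[𝕜] E) * (rankOne 𝕜 (φ n') (φ n') : E →ₗ[𝕜] E)).trace 𝕜 E =
        ((‖inner 𝕜 (φ n) (φ n')‖ ^ 2 : ℝ) : 𝕜) := by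
    rw [Module.End.mul_eq_comp, ← ContinuousLinearMap.toLinearMap_comp, rankOne_comp_rankOne,
      ContinuousLinearMap.toLinearMap_smul, map_smul, trace_rankOne, smul_eq_mul,
      ← inner_conj_symm (φ n') (φ n), RCLike.mul_conj, RCLike.ofReal_pow]
  simp only [frameOperator, Finset.sum_mul_sum, map_sum, trace_rankOne_mul]

theorem finrank_smul_frameOperator_eq_smul_one {φ : ι → E}
    (hφ : finrank 𝕜 E * ∑ n, ∑ n', ‖inner 𝕜 (φ n) (φ n')‖ ^ 2 = (∑ n, ‖φ n‖ ^ 2) ^ 2) :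
    (finrank 𝕜 E : 𝕜) • frameOperator 𝕜 φ =
      ((∑ n, ‖φ n‖ ^ 2 : ℝ) : 𝕜) • (1 : E →ₗ[𝕜] E) := by
  rw [← trace_frameOperator]
  refine finrank_smul_eq_trace_smul_one (isSymmetric_frameOperator φ) ?_
  rw [trace_frameOperator, trace_frameOperator_mul_self]
  exact_mod_cast hφ

end FrameOperator

theorem sum_sum_norm_sq_inner_of_equiangular {𝕜 ι E : Type*} [RCLike 𝕜] [Fintype ι]
    [NormedAddCommGroup E] [InnerProductSpace 𝕜 E] {φ : ι → E} {α : ℝ}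
    (hnorm : ∀ n, ‖φ n‖ = 1) (hinner : ∀ n n', n ≠ n' → ‖inner 𝕜 (φ n) (φ n')‖ ^ 2 = α) :
    ∑ n, ∑ n', ‖inner 𝕜 (φ n) (φ n')‖ ^ 2 =
      (Fintype.card ι : ℝ) * (1 + ((Fintype.card ι : ℝ) - 1) * α) := by
  classical
  have row_sum (n : ι) :
      ∑ n', ‖inner 𝕜 (φ n) (φ n')‖ ^ 2 = 1 + ((Fintype.card ι : ℝ) - 1) * α := by
    have hentry (n' : ι) : ‖inner 𝕜 (φ n) (φ n')‖ ^ 2 = (if n = n' then 1 - α else 0) + α := by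
      split_ifs with h
      · simp [← h, inner_self_eq_norm_sq_to_K, hnorm]
      · simp [hinner n n' h]
    simp only [hentry, Finset.sum_add_distrib, Finset.sum_ite_eq, Finset.mem_univ, if_true,
      Finset.sum_const, Finset.card_univ, nsmul_eq_mul]
    ring
  simp only [row_sum, Finset.sum_const, Finset.card_univ, nsmul_eq_mul]

theorem isETF_of_equiangular {ι E : Type*} [Fintype ι] [Nontrivial ι] [NormedAddCommGroup E]
    [InnerProductSpace ℂ E] [FiniteDimensional ℂ E] {D N : ℕ} {φ : ι → E}
    (hD : finrank ℂ E = D) (hN : Fintype.card ι = N) (hnorm : ∀ n, ‖φ n‖ = 1)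
    (hinner : ∀ n n', n ≠ n' →
      ‖inner ℂ (φ n) (φ n')‖ ^ 2 = ((N : ℝ) - D) / (D * ((N : ℝ) - 1))) :
    IsETF D N φ := by
  subst hD hN
  obtain ⟨n₀⟩ : Nonempty ι := inferInstance
  have : Nontrivial E := ⟨φ n₀, 0, norm_ne_zero_iff.1 (by simp [hnorm])⟩
  have hD₀ : finrank ℂ E ≠ 0 := finrank_pos.ne'
  have hN₁ : (Fintype.card ι : ℝ) - 1 ≠ 0 :=
    sub_ne_zero.2 (by exact_mod_cast Fintype.one_lt_card.ne')
  have welch_eq :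
      finrank ℂ E * ∑ n, ∑ n', ‖inner ℂ (φ n) (φ n')‖ ^ 2 = (∑ n, ‖φ n‖ ^ 2) ^ 2 := by
    rw [sum_sum_norm_sq_inner_of_equiangular hnorm hinner]
    simp only [hnorm, one_pow, Finset.sum_const, Finset.card_univ, nsmul_eq_mul, mul_one]
    field_simp
    ring
  refine ⟨hnorm, hinner, fun y => ?_⟩
  have tight := LinearMap.congr_fun (finrank_smul_frameOperator_eq_smul_one welch_eq) y
  simp only [hnorm, one_pow, Finset.sum_const, Finset.card_univ, nsmul_eq_mul, mul_one,
    LinearMap.smul_apply, frameOperator_apply, Module.End.one_apply, RCLike.ofReal_natCast] at tight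
  rw [div_eq_inv_mul, mul_smul, ← tight, inv_smul_smul₀ (by exact_mod_cast hD₀)]

section TensorVec

variable {ι κ : Type*} [Fintype ι] [Fintype κ]

theorem inner_tensorVec (u u' : EuclideanSpace ℂ ι) (v v' : EuclideanSpace ℂ κ) :
    inner ℂ (tensorVec u v) (tensorVec u' v') = inner ℂ u u' * inner ℂ v v' := by
  simp only [tensorVec, PiLp.inner_apply, RCLike.inner_apply, map_mul, Fintype.sum_prod_type,
    Finset.sum_mul_sum, mul_mul_mul_comm]

theorem norm_tensorVec (u : EuclideanSpace ℂ ι) (v : EuclideanSpace ℂ κ) :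
    ‖tensorVec u v‖ = ‖u‖ * ‖v‖ := by
  rw [← sq_eq_sq₀ (norm_nonneg _) (by positivity), mul_pow]
  simp only [EuclideanSpace.norm_sq_eq, tensorVec, norm_mul, mul_pow, Fintype.sum_prod_type,
    Finset.sum_mul_sum]

theorem norm_sq_inner_tensorVec_of_isMUETF {μ ν : Type*} {D N : ℕ} {φ : μ → EuclideanSpace ℂ ι}
    {ψ : μ → ν → EuclideanSpace ℂ κ} (hnorm : ∀ m, ‖φ m‖ = 1)
    (hinner : ∀ m m', m ≠ m' → ‖inner ℂ (φ m) (φ m')‖ ^ 2 = ((N : ℝ) - D) / ((N : ℝ) - 1))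
    (hψ : IsMUETF D N ψ) {p p' : μ × ν} (hp : p ≠ p') :
    ‖inner ℂ (tensorVec (φ p.1) (ψ p.1 p.2)) (tensorVec (φ p'.1) (ψ p'.1 p'.2))‖ ^ 2 =
      ((N : ℝ) - D) / (D * ((N : ℝ) - 1)) := by
  obtain ⟨m, n⟩ := p
  obtain ⟨m', n'⟩ := p'
  obtain ⟨-, hψ_same, hψ_diff⟩ := hψ
  rw [inner_tensorVec, norm_mul, mul_pow]
  rcases eq_or_ne m m' with rfl | hm
  · have hn : n ≠ n' := by rintro rfl; exact hp rfl
    simp [hψ_same m n n' hn, inner_self_eq_norm_sq_to_K, hnorm]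
  · rw [hinner m m' hm, hψ_diff m m' n n' hm, div_mul_div_comm, mul_one, mul_comm (D : ℝ)]

end TensorVec

section Parameters

theorem mul_sub_mul_eq_of_param {R : Type*} [CommRing R] {D₁ N₁ D₂ N₂ : R}
    (h : (N₁ - D₁) * (N₂ - 1) = (N₂ - D₂) * (D₁ * (N₁ - 1))) :
    N₁ * N₂ - D₁ * D₂ = D₁ * N₁ * (N₂ - D₂) + (N₁ - D₁) := by
  linear_combination h

theorem mul_sub_mul_div_eq_of_param {K : Type*} [Field K] {D₁ N₁ D₂ N₂ : K}
    (hN₂ : N₂ - 1 ≠ 0) (hN : N₁ * N₂ - 1 ≠ 0)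
    (h : (N₁ - D₁) * (N₂ - 1) = (N₂ - D₂) * (D₁ * (N₁ - 1))) :
    (N₁ * N₂ - D₁ * D₂) / (N₁ * N₂ - 1) = D₁ * ((N₂ - D₂) / (N₂ - 1)) := by
  rw [← mul_div_assoc, div_eq_div_iff hN hN₂]
  linear_combination N₂ * h

theorem mul_sub_mul_div_mul_eq_of_param {K : Type*} [Field K] {D₁ N₁ D₂ N₂ : K}
    (hD₁ : D₁ ≠ 0) (hN₂ : N₂ - 1 ≠ 0) (hN : N₁ * N₂ - 1 ≠ 0)
    (h : (N₁ - D₁) * (N₂ - 1) = (N₂ - D₂) * (D₁ * (N₁ - 1))) :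
    (N₁ * N₂ - D₁ * D₂) / (D₁ * D₂ * (N₁ * N₂ - 1)) = (N₂ - D₂) / (D₂ * (N₂ - 1)) := by
  rw [mul_comm (D₁ * D₂), ← div_div, mul_sub_mul_div_eq_of_param hN₂ hN h,
    mul_div_mul_left _ _ hD₁, div_div, mul_comm (N₂ - 1)]

end Parameters

/-- if `(N₁−D₁)/(D₁(N₁−1)) = (N₂−D₂)/(N₂−1)`, `(φ n₁)` is an
`ETF(D₁,N₁)` in `ℂ^{D₁}` and `(ψ n₁ n₂)` is an `MUETF(D₂,N₂,N₁)` in `ℂ^{D₂}`, then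
`(φ n₁ ⊗ ψ n₁ n₂)` is an `ETF(D₃,N₃)` in `ℂ^{D₁} ⊗ ℂ^{D₂} ≅ ℂ^{D₁D₂}` with `D₃ = D₁D₂`,
`N₃ = N₁N₂`, and moreover `N₃ − D₃ = D₁N₁(N₂−D₂) + (N₁−D₁)`,
`(N₃−D₃)/(D₃(N₃−1)) = (N₂−D₂)/(D₂(N₂−1))`, and
`D₃(N₃−D₃)/(N₃−1) = D₁²·D₂(N₂−D₂)/(N₂−1)`. -/
theorem stmt12 (D₁ N₁ D₂ N₂ : ℕ)
    (hD₁ : 0 < D₁) (h₁ : D₁ ≤ N₁) (hN₁ : 2 ≤ N₁)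
    (hD₂ : 0 < D₂) (h₂ : D₂ ≤ N₂) (hN₂ : 2 ≤ N₂)
    (hcons : ((N₁ : ℝ) - D₁) / (D₁ * ((N₁ : ℝ) - 1)) = ((N₂ : ℝ) - D₂) / ((N₂ : ℝ) - 1))
    (φ : Fin N₁ → EuclideanSpace ℂ (Fin D₁)) (hφ : IsETF D₁ N₁ φ)
    (ψ : Fin N₁ → Fin N₂ → EuclideanSpace ℂ (Fin D₂)) (hψ : IsMUETF D₂ N₂ ψ) :
    IsETF (D₁ * D₂) (N₁ * N₂)
      (fun p : Fin N₁ × Fin N₂ => tensorVec (φ p.1) (ψ p.1 p.2)) ∧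
    N₁ * N₂ - D₁ * D₂ = D₁ * N₁ * (N₂ - D₂) + (N₁ - D₁) ∧
    ((N₁ * N₂ : ℝ) - D₁ * D₂) / ((D₁ * D₂ : ℝ) * ((N₁ * N₂ : ℝ) - 1)) =
      ((N₂ : ℝ) - D₂) / (D₂ * ((N₂ : ℝ) - 1)) ∧
    (D₁ * D₂ : ℝ) * ((N₁ * N₂ : ℝ) - D₁ * D₂) / ((N₁ * N₂ : ℝ) - 1) =
      (D₁ : ℝ) ^ 2 * ((D₂ : ℝ) * ((N₂ : ℝ) - D₂) / ((N₂ : ℝ) - 1)) := by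
  have hD₁' : (D₁ : ℝ) ≠ 0 := by positivity
  have hN₁' : (N₁ : ℝ) - 1 ≠ 0 := sub_ne_zero.2 (by norm_cast; omega)
  have hN₂' : (N₂ : ℝ) - 1 ≠ 0 := sub_ne_zero.2 (by norm_cast; omega)
  have hN : (N₁ * N₂ : ℝ) - 1 ≠ 0 := sub_ne_zero.2 (by norm_cast; rw [mul_eq_one]; omega)
  have hparam := (div_eq_div_iff (mul_ne_zero hD₁' hN₁') hN₂').1 hcons
  have hwelch := mul_sub_mul_div_mul_eq_of_param hD₁' hN₂' hN hparam
  refine ⟨?_, ?_, hwelch, ?_⟩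
  · have : Nontrivial (Fin N₁) := Fin.nontrivial_iff_two_le.2 hN₁
    have : Nonempty (Fin N₂) := Fin.pos_iff_nonempty.1 (by omega)
    refine isETF_of_equiangular (by simp) (by simp) ?_ fun p p' hp => ?_
    · simp [norm_tensorVec, hφ.1, hψ.1]
    · push_cast
      rw [hwelch]
      exact norm_sq_inner_tensorVec_of_isMUETF hφ.1
        (fun m m' hm => (hφ.2.1 m m' hm).trans hcons) hψ hp
  · have hle : D₁ * D₂ ≤ N₁ * N₂ := Nat.mul_le_mul h₁ h₂
    zify [hle, h₁, h₂]
    exact_mod_cast mul_sub_mul_eq_of_param hparam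
  · rw [mul_div_assoc, mul_sub_mul_div_eq_of_param hN₂' hN hparam]
    ring
end
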